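/- For every t > 0 and all x, y ∈ (0,∞)^d it holds that h(x)·q(t;x,y) = h(y)·q(t;y,x); that is, the lognormal transition density of a d-dimensional geometric Brownian motion is symmetric with respect to the measure m(dy) = h(y)dy. (This detailed-balance identity is the content of the paper's self-duality result, Proposition 2.1.) -/

import Mathlib

/-!
Write `B u v = u ⬝ᵥ S⁻¹ *ᵥ v`, a symmetric bilinear form since `S` is symmetric, and let `p`, `q`
be the log-coordinates of `x`, `y`. The increment is `z = q - p`, and expanding the square gives
`2 B m p - B (z - t m) (z - t m) / (2t) = B m p + B m q - (B z z + t² B m m) / (2t)`,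
which is invariant under `p ↔ q`, `z ↔ -z` (`exponent_symm`). The remaining factors are symmetric
because `(∏ xᵢ⁻¹) (∏ aᵢ yᵢ)⁻¹ = (∏ aᵢ)⁻¹ (∏ xᵢ)⁻¹ (∏ yᵢ)⁻¹`.
-/

open MeasureTheory Matrix Real BigOperators

/-- The lognormal transition density `q(t;x,y)` of a `d`-dimensional geometric Brownian
motion with volatility vector `a`, drift vector `mbar` (in log-coordinates) and
correlation matrix `S`. -/
noncomputable def lognormalDensity {d : ℕ} (a mbar : Fin d → ℝ)
    (S : Matrix (Fin d) (Fin d) ℝ) (t : ℝ) (x y : Fin d → ℝ) : ℝ :=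
  let z : Fin d → ℝ := fun i => (1 / a i) * Real.log (y i / x i)
  (2 * Real.pi * t) ^ (-(d : ℝ) / 2) * S.det ^ (-(1 : ℝ) / 2) * (∏ i, a i * y i)⁻¹ *
    Real.exp (-(1 / (2 * t)) * ((z - t • mbar) ⬝ᵥ S⁻¹.mulVec (z - t • mbar)))

/-- The density `h(y)` of the duality measure `m(dy) = h(y) dy`. -/
noncomputable def weight {d : ℕ} (a mbar : Fin d → ℝ)
    (S : Matrix (Fin d) (Fin d) ℝ) (y : Fin d → ℝ) : ℝ :=
  (∏ i, (y i)⁻¹) *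
    Real.exp (2 * (mbar ⬝ᵥ S⁻¹.mulVec fun i => (1 / a i) * Real.log (y i)))

/-- The quadratic part of the exponent is even in the increment `q - p`, and the drift turns the
cross term `B m (q - p)` plus `2 B m p` into the symmetric `B m p + B m q`. -/
lemma exponent_symm {d : ℕ} (A : Matrix (Fin d) (Fin d) ℝ) (hA : Aᵀ = A) (t : ℝ) (ht : t ≠ 0)
    (m p q : Fin d → ℝ) :
    2 * (m ⬝ᵥ A *ᵥ p) + -(1 / (2 * t)) * ((q - p - t • m) ⬝ᵥ A *ᵥ (q - p - t • m))
      = 2 * (m ⬝ᵥ A *ᵥ q) + -(1 / (2 * t)) * ((p - q - t • m) ⬝ᵥ A *ᵥ (p - q - t • m)) := by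
  have symm : ∀ u v : Fin d → ℝ, u ⬝ᵥ A *ᵥ v = v ⬝ᵥ A *ᵥ u := fun u v => by
    rw [dotProduct_mulVec, ← mulVec_transpose, hA, dotProduct_comm]
  simp only [mulVec_sub, mulVec_smul, dotProduct_sub, sub_dotProduct, smul_dotProduct,
    dotProduct_smul, smul_eq_mul]
  rw [symm p m, symm q m, symm q p]
  field_simp
  ring

/-- Detailed balance: `h(x) q(t;x,y) = h(y) q(t;y,x)` for all `t > 0` and
`x, y ∈ (0,∞)^d`. -/
theorem detailed_balance {d : ℕ} (hd : 1 ≤ d) (a μ : Fin d → ℝ) (ha : ∀ i, 0 < a i)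
    (S : Matrix (Fin d) (Fin d) ℝ) (hS : S.PosDef) (hdiag : ∀ i, S i i = 1)
    (t : ℝ) (ht : 0 < t) (x y : Fin d → ℝ)
    (hx : ∀ i, 0 < x i) (hy : ∀ i, 0 < y i) :
    weight a (fun i => (μ i - (a i) ^ 2 / 2) / a i) S x *
        lognormalDensity a (fun i => (μ i - (a i) ^ 2 / 2) / a i) S t x y
      = weight a (fun i => (μ i - (a i) ^ 2 / 2) / a i) S y *
        lognormalDensity a (fun i => (μ i - (a i) ^ 2 / 2) / a i) S t y x := by
  have hA : (S⁻¹)ᵀ = S⁻¹ := by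
    simpa [IsHermitian, conjTranspose_eq_transpose_of_trivial] using hS.isHermitian.inv
  generalize (fun i => (μ i - (a i) ^ 2 / 2) / a i) = m
  have hlog : ∀ u v : Fin d → ℝ, (∀ i, 0 < u i) → (∀ i, 0 < v i) →
      (fun i => (1 / a i) * Real.log (v i / u i)) =
        (fun i => (1 / a i) * Real.log (v i)) - fun i => (1 / a i) * Real.log (u i) := by
    intro u v hu hv
    ext i
    simp only [Pi.sub_apply]
    rw [Real.log_div (hv i).ne' (hu i).ne', mul_sub]
  have key := congrArg Real.exp (exponent_symm S⁻¹ hA t ht.ne' m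
    (fun i => (1 / a i) * Real.log (x i)) (fun i => (1 / a i) * Real.log (y i)))
  rw [Real.exp_add, Real.exp_add] at key
  simp only [weight, lognormalDensity]
  rw [hlog x y hx hy, hlog y x hy hx]
  simp only [Finset.prod_mul_distrib, Finset.prod_inv_distrib, mul_inv]
  linear_combination ((2 * Real.pi * t) ^ (-(d : ℝ) / 2) * S.det ^ (-(1 : ℝ) / 2) *
    (∏ i, a i)⁻¹ * (∏ i, x i)⁻¹ * (∏ i, y i)⁻¹) * key
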